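/- Let d ≥ 1, ε ∈ (0,1], and let A : ℝ^d → ℝ^{d×d} be a measurable matrix-valued function such that for almost every x ∈ ℝ^d the matrix A(x) is nonzero and satisfies the Cordes condition with parameter ε; set γ(x) := tr A(x)/‖A(x)‖_F². Then for every smooth (C^∞) compactly supported u : ℝ^d → ℝ, with Hessian ∇²u(x) = (∂_i∂_j u(x))_{i,j} and Laplacian Δu = tr ∇²u, one has ∫_{ℝ^d} γ(x)·(A(x):∇²u(x))·Δu(x) dx ≥ (1−√(1−ε))·∫_{ℝ^d} (Δu(x))² dx. (This is the whole-space form of the coercivity of the bilinear form a(u,v) = ∫ γA:∇²u Δv dx underlying Lemma 2.2; it combines the Cordes estimate of Lemma 2.1 with the Miranda–Talenti identity on ℝ^d.) -/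

import Mathlib

open Matrix MeasureTheory

/-- Frobenius inner product of two `d × d` real matrices. -/
noncomputable def frobInner {d : ℕ} (A B : Matrix (Fin d) (Fin d) ℝ) : ℝ :=
  ∑ i, ∑ j, A i j * B i j

/-- Frobenius norm of a `d × d` real matrix. -/
noncomputable def frobNorm {d : ℕ} (A : Matrix (Fin d) (Fin d) ℝ) : ℝ :=
  Real.sqrt (frobInner A A)

/-- The Cordes condition with parameter `ε`. -/
def CordesCond {d : ℕ} (ε : ℝ) (A : Matrix (Fin d) (Fin d) ℝ) : Prop :=
  ((d : ℝ) - 1 + ε) * frobNorm A ^ 2 ≤ trace A ^ 2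

/-- The Hessian matrix of a function `u : ℝ^d → ℝ` at a point `x`. -/
noncomputable def hessianMatrix {d : ℕ} (u : (Fin d → ℝ) → ℝ) (x : Fin d → ℝ) :
    Matrix (Fin d) (Fin d) ℝ :=
  Matrix.of fun i j =>
    fderiv ℝ (fun y => fderiv ℝ u y (Pi.single i 1)) x (Pi.single j 1)

/-- directional derivative -/
noncomputable def pd {d : ℕ} (i : Fin d) (f : (Fin d → ℝ) → ℝ) : (Fin d → ℝ) → ℝ :=
  fun y => fderiv ℝ f y (Pi.single i 1)

theorem pd_smooth {d : ℕ} (i : Fin d) {f : (Fin d → ℝ) → ℝ} (hf : ContDiff ℝ (⊤ : ℕ∞) f) :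
    ContDiff ℝ (⊤ : ℕ∞) (pd i f) := by
  have h : ContDiff ℝ (⊤ : ℕ∞) (fderiv ℝ f) := hf.fderiv_right (by simp)
  exact h.clm_apply contDiff_const

theorem pd_supp {d : ℕ} (i : Fin d) {f : (Fin d → ℝ) → ℝ} (hf : HasCompactSupport f) :
    HasCompactSupport (pd i f) := hf.fderiv_apply ℝ _

theorem pd_comm {d : ℕ} (i j : Fin d) {f : (Fin d → ℝ) → ℝ} (hf : ContDiff ℝ (⊤ : ℕ∞) f) :
    pd i (pd j f) = pd j (pd i f) := by
  have h : ContDiff ℝ (⊤ : ℕ∞) (fderiv ℝ f) := hf.fderiv_right (by simp)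
  have hd : Differentiable ℝ (fderiv ℝ f) := h.differentiable (by simp)
  have key : ∀ (k l : Fin d) x, pd k (pd l f) x
      = fderiv ℝ (fderiv ℝ f) x (Pi.single k 1) (Pi.single l 1) := by
    intro k l x
    unfold pd
    rw [fderiv_clm_apply (hd x) (differentiableAt_const _)]
    simp
  funext x
  rw [key, key]
  have := (hf.contDiffAt (x := x)).isSymmSndFDerivAt (by
    rw [minSmoothness_of_isRCLikeNormedField]
    exact WithTop.coe_le_coe.2 (le_top : (2 : ℕ∞) ≤ ⊤))
  exact this _ _

theorem mul_int {d : ℕ} {f g : (Fin d → ℝ) → ℝ} (hf : ContDiff ℝ (⊤ : ℕ∞) f)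
    (hg : ContDiff ℝ (⊤ : ℕ∞) g) (hfs : HasCompactSupport f) :
    Integrable (fun x => f x * g x) :=
  (hf.continuous.mul hg.continuous).integrable_of_hasCompactSupport hfs.mul_right

theorem ibp {d : ℕ} (i : Fin d) {f g : (Fin d → ℝ) → ℝ} (hf : ContDiff ℝ (⊤ : ℕ∞) f)
    (hg : ContDiff ℝ (⊤ : ℕ∞) g) (hfs : HasCompactSupport f) :
    ∫ x, f x * pd i g x = - ∫ x, pd i f x * g x :=
  integral_mul_fderiv_eq_neg_fderiv_mul_of_integrable
    (mul_int (pd_smooth i hf) hg (pd_supp i hfs)) (mul_int hf (pd_smooth i hg) hfs)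
    (mul_int hf hg hfs) (fun x _ => hf.differentiable (by simp) x) (fun x _ => hg.differentiable (by simp) x)

theorem mt_aux {d : ℕ} (i j : Fin d) {u : (Fin d → ℝ) → ℝ} (hu : ContDiff ℝ (⊤ : ℕ∞) u)
    (hc : HasCompactSupport u) :
    ∫ x, pd j (pd i u) x * pd j (pd i u) x = ∫ x, pd i (pd i u) x * pd j (pd j u) x := by
  have hi := pd_smooth i hu
  have hj := pd_smooth j hu
  have h1 := ibp j hi (pd_smooth j hi) (pd_supp i hc)
  have h2 := ibp i hi (pd_smooth j hj) (pd_supp i hc)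
  have h3 : pd j (pd j (pd i u)) = pd i (pd j (pd j u)) := by
    rw [pd_comm j i hu, pd_comm j i hj]
  rw [h3] at h1
  linarith

theorem hess_apply {d : ℕ} (u : (Fin d → ℝ) → ℝ) (x) (i j : Fin d) :
    hessianMatrix u x i j = pd j (pd i u) x := rfl

theorem frob_int {d : ℕ} {u : (Fin d → ℝ) → ℝ} (hu : ContDiff ℝ (⊤ : ℕ∞) u)
    (hc : HasCompactSupport u) :
    Integrable (fun x => frobInner (hessianMatrix u x) (hessianMatrix u x)) := by
  simp only [frobInner, hess_apply]
  refine integrable_finsetSum _ fun i _ => integrable_finsetSum _ fun j _ => ?_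
  exact mul_int (pd_smooth _ (pd_smooth _ hu)) (pd_smooth _ (pd_smooth _ hu))
    (pd_supp _ (pd_supp _ hc))

theorem tr_sq {d : ℕ} (u : (Fin d → ℝ) → ℝ) (x) : trace (hessianMatrix u x) ^ 2
    = ∑ i, ∑ j, pd i (pd i u) x * pd j (pd j u) x := by
  rw [sq, trace, Finset.sum_mul_sum]
  rfl

theorem tr_int {d : ℕ} {u : (Fin d → ℝ) → ℝ} (hu : ContDiff ℝ (⊤ : ℕ∞) u)
    (hc : HasCompactSupport u) :
    Integrable (fun x => trace (hessianMatrix u x) ^ 2) := by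
  simp only [tr_sq]
  refine integrable_finsetSum _ fun i _ => integrable_finsetSum _ fun j _ => ?_
  exact mul_int (pd_smooth _ (pd_smooth _ hu)) (pd_smooth _ (pd_smooth _ hu))
    (pd_supp _ (pd_supp _ hc))

theorem miranda {d : ℕ} {u : (Fin d → ℝ) → ℝ} (hu : ContDiff ℝ (⊤ : ℕ∞) u)
    (hc : HasCompactSupport u) :
    ∫ x, frobInner (hessianMatrix u x) (hessianMatrix u x)
      = ∫ x, trace (hessianMatrix u x) ^ 2 := by
  have hI : ∀ i j k l : Fin d, Integrable fun x => pd i (pd j u) x * pd k (pd l u) x :=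
    fun i j k l => mul_int (pd_smooth _ (pd_smooth _ hu)) (pd_smooth _ (pd_smooth _ hu))
      (pd_supp _ (pd_supp _ hc))
  simp only [tr_sq, frobInner, hess_apply]
  rw [integral_finsetSum _ fun i _ => integrable_finsetSum _ fun j _ => hI _ _ _ _,
    integral_finsetSum _ fun i _ => integrable_finsetSum _ fun j _ => hI _ _ _ _]
  refine Finset.sum_congr rfl fun i _ => ?_
  rw [integral_finsetSum _ fun j _ => hI _ _ _ _, integral_finsetSum _ fun j _ => hI _ _ _ _]
  exact Finset.sum_congr rfl fun j _ => mt_aux i j hu hc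

theorem frob_nonneg {d : ℕ} (A : Matrix (Fin d) (Fin d) ℝ) : 0 ≤ frobInner A A :=
  Finset.sum_nonneg fun _ _ => Finset.sum_nonneg fun _ _ => mul_self_nonneg _

theorem frob_pos {d : ℕ} {A : Matrix (Fin d) (Fin d) ℝ} (hA : A ≠ 0) : 0 < frobInner A A := by
  refine lt_of_le_of_ne (frob_nonneg A) fun h => hA ?_
  ext i j
  have h1 := (Finset.sum_eq_zero_iff_of_nonneg (fun i _ =>
    Finset.sum_nonneg fun j _ => mul_self_nonneg (A i j))).1 h.symm i (Finset.mem_univ _)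
  have h2 := (Finset.sum_eq_zero_iff_of_nonneg (fun j _ => mul_self_nonneg (A i j))).1 h1 j
    (Finset.mem_univ _)
  simpa using h2

theorem frob_cs {d : ℕ} (A B : Matrix (Fin d) (Fin d) ℝ) :
    frobInner A B ^ 2 ≤ frobInner A A * frobInner B B := by
  have := Finset.sum_mul_sq_le_sq_mul_sq (Finset.univ : Finset (Fin d × Fin d))
    (fun p => A p.1 p.2) (fun p => B p.1 p.2)
  simpa only [Fintype.sum_prod_type, sq, frobInner] using this

theorem frob_shift {d : ℕ} (g : ℝ) (A B : Matrix (Fin d) (Fin d) ℝ) :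
    frobInner (g • A - 1) B = g * frobInner A B - trace B := by
  simp [frobInner, sub_mul, Finset.sum_sub_distrib, Matrix.one_apply, Finset.mul_sum, mul_assoc,
    trace]

theorem frob_comm {d : ℕ} (A B : Matrix (Fin d) (Fin d) ℝ) : frobInner A B = frobInner B A := by
  simp [frobInner, mul_comm]

theorem cordes_pt {d : ℕ} {ε : ℝ} (hε1 : ε ≤ 1) {A : Matrix (Fin d) (Fin d) ℝ}
    (hA : A ≠ 0) (hC : CordesCond ε A) (H : Matrix (Fin d) (Fin d) ℝ) :
    |(trace A / frobNorm A ^ 2) * frobInner A H * trace H - trace H ^ 2|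
      ≤ Real.sqrt (1 - ε) / 2 * (frobInner H H + trace H ^ 2) := by
  unfold CordesCond at hC
  have hp := frob_pos hA
  have hn : frobNorm A ^ 2 = frobInner A A := Real.sq_sqrt hp.le
  rw [hn] at hC ⊢
  set g := trace A / frobInner A A with hg
  have h1 : frobInner (g • A - 1) (g • A - 1) ≤ 1 - ε := by
    rw [frob_shift, frob_comm A, frob_shift]
    have e1 : g * frobInner A A = trace A := div_mul_cancel₀ _ hp.ne'
    have e2 : trace (g • A - 1) = g * trace A - d := by simp
    have e3 : g * trace A = trace A ^ 2 / frobInner A A := by rw [hg]; ring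
    rw [e1, e2, e3]
    have : (d : ℝ) - 1 + ε ≤ trace A ^ 2 / frobInner A A := by rwa [le_div_iff₀ hp]
    linarith
  have h2 := frob_cs (g • A - 1) H
  rw [frob_shift g A H] at h2
  have hs := Real.sq_sqrt (sub_nonneg.2 hε1)
  have hs0 := Real.sqrt_nonneg (1 - ε)
  set s := Real.sqrt (1 - ε)
  have hH := frob_nonneg H
  have hr := Real.sq_sqrt hH
  have hr0 := Real.sqrt_nonneg (frobInner H H)
  set r := Real.sqrt (frobInner H H)
  have h3 : |g * frobInner A H - trace H| ≤ s * r := by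
    apply abs_le_of_sq_le_sq _ (by positivity)
    rw [mul_pow, hs, hr]
    exact h2.trans (mul_le_mul_of_nonneg_right h1 hH)
  calc _ = |g * frobInner A H - trace H| * |trace H| := by rw [← abs_mul]; ring_nf
    _ ≤ s * r * |trace H| := by gcongr
    _ ≤ _ := by
      rw [← hr, ← sq_abs (trace H)]
      nlinarith [mul_nonneg hs0 (sq_nonneg (r - |trace H|))]

theorem cordes_coercivity_integral {d : ℕ} (hd : 1 ≤ d) {ε : ℝ}
    (hε0 : 0 < ε) (hε1 : ε ≤ 1)
    (A : (Fin d → ℝ) → Matrix (Fin d) (Fin d) ℝ)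
    (hmeas : ∀ i j, Measurable fun x => A x i j)
    (hae : ∀ᵐ x : Fin d → ℝ, A x ≠ 0 ∧ CordesCond ε (A x))
    (u : (Fin d → ℝ) → ℝ) (hu : ContDiff ℝ (⊤ : ℕ∞) u) (hc : HasCompactSupport u) :
    (1 - Real.sqrt (1 - ε)) * ∫ x : Fin d → ℝ, (trace (hessianMatrix u x)) ^ 2
      ≤ ∫ x : Fin d → ℝ,
          (trace (A x) / frobNorm (A x) ^ 2) * frobInner (A x) (hessianMatrix u x)
            * trace (hessianMatrix u x) := by
  have hF := frob_int hu hc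
  have hT := tr_int hu hc
  have hM := miranda hu hc
  have hHm : ∀ i j, Measurable fun x => hessianMatrix u x i j := fun i j =>
    (pd_smooth j (pd_smooth i hu)).continuous.measurable
  have hB : Integrable (fun x => Real.sqrt (1 - ε) / 2 *
      (frobInner (hessianMatrix u x) (hessianMatrix u x) + trace (hessianMatrix u x) ^ 2)) :=
    (hF.add hT).const_mul _
  have hm : Measurable (fun x => (trace (A x) / frobNorm (A x) ^ 2)
      * frobInner (A x) (hessianMatrix u x) * trace (hessianMatrix u x)) := by
    simp only [frobNorm, frobInner, trace, Matrix.diag]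
    fun_prop
  have hD : Integrable (fun x => (trace (A x) / frobNorm (A x) ^ 2)
      * frobInner (A x) (hessianMatrix u x) * trace (hessianMatrix u x)
        - trace (hessianMatrix u x) ^ 2) := by
    refine hB.mono' (hm.aestronglyMeasurable.sub hT.aestronglyMeasurable) ?_
    filter_upwards [hae] with x hx
    exact cordes_pt hε1 hx.1 hx.2 _
  have hI : Integrable (fun x => (trace (A x) / frobNorm (A x) ^ 2)
      * frobInner (A x) (hessianMatrix u x) * trace (hessianMatrix u x)) := by
    refine (hD.add hT).congr (Filter.Eventually.of_forall fun x => ?_)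
    simp only [Pi.add_apply, sub_add_cancel]
  have hle := integral_mono_ae (hT.sub hB) hI (by
    filter_upwards [hae] with x hx
    have := (abs_le.1 (cordes_pt hε1 hx.1 hx.2 (hessianMatrix u x))).1
    simp only [Pi.sub_apply]
    linarith)
  refine le_trans (le_of_eq ?_) hle
  simp only [Pi.sub_apply]
  rw [integral_sub hT hB, integral_const_mul, integral_add hF hT, hM]
  ring
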